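/- Let G ≠ 0, ‖H‖ ≤ K_H with K_H > 0, and let η^C := -α G where α ≥ 0 is a global minimizer of t ↦ m(-t G) over t ≥ 0. Then ‖η^C‖ ≥ (1/(2σ)) (√(K_H² + 4σ‖G‖) - K_H). (Inequality (4) of Lemma 3.1, the Cauchy-step length bound.) -/

import Mathlib

open RealInnerProductSpace

/-!
Along the ray `t ↦ -t G`, `t ≥ 0`, the model is a cubic polynomial in `t`. Since one can always move
to the right along the ray, its derivative at a minimizer `α` is nonnegative, whether or not
`α = 0`. Divided by `‖G‖`, and with `⟪H G, G⟫ ≤ K ‖G‖ ^ 2`, this says that the step length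
`r = α ‖G‖` satisfies `‖G‖ ≤ K r + σ r ^ 2`, so `r` is at least the positive root of
`σ r ^ 2 + K r - ‖G‖`.
-/

open Set Topology

theorem nonneg_of_isLocalMinOn_of_hasDerivWithinAt {f : ℝ → ℝ} {f' a : ℝ} {s : Set ℝ}
    (hmin : IsLocalMinOn f s a) (hf : HasDerivWithinAt f f' s a) (hs : ∃ᶠ x in 𝓝[>] a, x ∈ s) :
    0 ≤ f' := by
  simpa using hmin.hasFDerivWithinAt_nonneg hf.hasFDerivWithinAt
    (one_mem_posTangentConeAt_iff_frequently.mpr hs)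

theorem pos_root_le_of_le_quadratic {σ K g r : ℝ} (hσ : 0 < σ) (hg : 0 < g)
    (hr : 0 ≤ r) (h : g ≤ K * r + σ * r ^ 2) :
    (1 / (2 * σ)) * (√(K ^ 2 + 4 * σ * g) - K) ≤ r := by
  have slope_pos : 0 < K + σ * r := by
    refine pos_of_mul_pos_right (a := r) ?_ hr
    linarith
  have sqrt_le : √(K ^ 2 + 4 * σ * g) ≤ 2 * σ * r + K := by
    refine Real.sqrt_le_iff.mpr ⟨by linarith [mul_nonneg hσ.le hr], ?_⟩
    calc K ^ 2 + 4 * σ * g ≤ K ^ 2 + 4 * σ * (K * r + σ * r ^ 2) := by gcongr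
      _ = (2 * σ * r + K) ^ 2 := by ring
  rw [one_div, inv_mul_le_iff₀ (by positivity)]
  linarith

theorem real_inner_apply_self_le_opNorm_mul_norm_sq {E : Type*} [SeminormedAddCommGroup E]
    [InnerProductSpace ℝ E] (T : E →L[ℝ] E) (x : E) : ⟪T x, x⟫ ≤ ‖T‖ * ‖x‖ ^ 2 :=
  calc ⟪T x, x⟫ ≤ ‖T x‖ * ‖x‖ := real_inner_le_norm _ _
    _ ≤ ‖T‖ * ‖x‖ * ‖x‖ := by gcongr; exact T.le_opNorm x
    _ = ‖T‖ * ‖x‖ ^ 2 := by ring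

section CubicModel

variable {E : Type*} [SeminormedAddCommGroup E] [InnerProductSpace ℝ E]

/-- The cubic-regularized model with gradient `G`, Hessian `H` and regularization parameter `σ`. -/
noncomputable def cubicModel (G : E) (H : E →ₗ[ℝ] E) (σ : ℝ) (ξ : E) : ℝ :=
  ⟪G, ξ⟫ + (1 / 2) * ⟪H ξ, ξ⟫ + (σ / 3) * ‖ξ‖ ^ 3

theorem cubicModel_neg_smul (G : E) (H : E →ₗ[ℝ] E) (σ : ℝ) {t : ℝ} (ht : 0 ≤ t) :
    cubicModel G H σ (-(t • G)) =
      -‖G‖ ^ 2 * t + ⟪H G, G⟫ / 2 * t ^ 2 + σ * ‖G‖ ^ 3 / 3 * t ^ 3 := by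
  simp only [cubicModel, map_neg, map_smul, inner_neg_left, inner_neg_right, real_inner_smul_left,
    real_inner_smul_right, norm_neg, norm_smul_of_nonneg ht, real_inner_self_eq_norm_sq]
  ring

theorem hasDerivWithinAt_cubicModel_neg_smul (G : E) (H : E →ₗ[ℝ] E) (σ : ℝ) {α : ℝ}
    (hα : 0 ≤ α) :
    HasDerivWithinAt (fun t : ℝ ↦ cubicModel G H σ (-(t • G)))
      (-‖G‖ ^ 2 + ⟪H G, G⟫ * α + σ * ‖G‖ ^ 3 * α ^ 2) (Ici 0) α := by
  have hpoly : HasDerivAt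
      (fun t : ℝ ↦ -‖G‖ ^ 2 * t + ⟪H G, G⟫ / 2 * t ^ 2 + σ * ‖G‖ ^ 3 / 3 * t ^ 3)
      (-‖G‖ ^ 2 + ⟪H G, G⟫ * α + σ * ‖G‖ ^ 3 * α ^ 2) α := by
    refine ((((hasDerivAt_id' α).const_mul (-‖G‖ ^ 2)).fun_add
      ((hasDerivAt_pow 2 α).const_mul (⟪H G, G⟫ / 2))).fun_add
      ((hasDerivAt_pow 3 α).const_mul (σ * ‖G‖ ^ 3 / 3))).congr_deriv ?_
    push_cast
    ring
  exact hpoly.hasDerivWithinAt.congr_of_mem (fun t ht ↦ cubicModel_neg_smul G H σ ht) hα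

variable {G : E} {H : E →ₗ[ℝ] E} {σ K α : ℝ}

theorem norm_le_of_isLocalMinOn_cubicModel_neg_smul (hK : ⟪H G, G⟫ ≤ K * ‖G‖ ^ 2) (hα : 0 ≤ α)
    (hmin : IsLocalMinOn (fun t : ℝ ↦ cubicModel G H σ (-(t • G))) (Ici 0) α) :
    ‖G‖ ≤ K * ‖α • G‖ + σ * ‖α • G‖ ^ 2 := by
  have frequently_mem : ∃ᶠ t in 𝓝[>] α, t ∈ Ici (0 : ℝ) :=
    (eventually_mem_nhdsWithin.mono fun _ ht ↦ hα.trans (mem_Ioi.mp ht).le).frequently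
  have deriv_nonneg : 0 ≤ -‖G‖ ^ 2 + ⟪H G, G⟫ * α + σ * ‖G‖ ^ 3 * α ^ 2 :=
    nonneg_of_isLocalMinOn_of_hasDerivWithinAt hmin
      (hasDerivWithinAt_cubicModel_neg_smul G H σ hα) frequently_mem
  rw [norm_smul_of_nonneg hα]
  obtain norm_eq_zero | norm_pos := (norm_nonneg G).eq_or_lt
  · simp [← norm_eq_zero]
  refine le_of_mul_le_mul_left ?_ norm_pos
  calc ‖G‖ * ‖G‖ ≤ ⟪H G, G⟫ * α + σ * ‖G‖ ^ 3 * α ^ 2 := by linarith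
    _ ≤ K * ‖G‖ ^ 2 * α + σ * ‖G‖ ^ 3 * α ^ 2 := by gcongr
    _ = ‖G‖ * (K * (α * ‖G‖) + σ * (α * ‖G‖) ^ 2) := by ring

theorem cauchy_point_length_general (hG : ‖G‖ ≠ 0) (hK : ⟪H G, G⟫ ≤ K * ‖G‖ ^ 2) (hσ : 0 < σ)
    (hα : 0 ≤ α)
    (hmin : IsLocalMinOn (fun t : ℝ ↦ cubicModel G H σ (-(t • G))) (Ici 0) α) :
    (1 / (2 * σ)) * (√(K ^ 2 + 4 * σ * ‖G‖) - K) ≤ ‖-(α • G)‖ := by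
  rw [norm_neg]
  exact pos_root_le_of_le_quadratic hσ ((norm_nonneg G).lt_of_ne' hG) (norm_nonneg _)
    (norm_le_of_isLocalMinOn_cubicModel_neg_smul hK hα hmin)

end CubicModel

/-- Inequality (4) of Lemma 3.1: the Cauchy-step length bound. -/
theorem cauchy_point_length
    {E : Type*} [NormedAddCommGroup E] [InnerProductSpace ℝ E] [FiniteDimensional ℝ E]
    (G : E) (hG : G ≠ 0) (H : E →L[ℝ] E) (hH : IsSelfAdjoint H)
    (K_H : ℝ) (hK : 0 < K_H) (hHK : ‖H‖ ≤ K_H)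
    (σ : ℝ) (hσ : 0 < σ)
    (m : E → ℝ)
    (hm : ∀ ξ : E, m ξ = ⟪G, ξ⟫ + (1 / 2) * ⟪H ξ, ξ⟫ + (σ / 3) * ‖ξ‖ ^ 3)
    (α : ℝ) (hα : 0 ≤ α)
    (hmin : ∀ t : ℝ, 0 ≤ t → m (-(α • G)) ≤ m (-(t • G)))
    (ηC : E) (hηC : ηC = -(α • G)) :
    ‖ηC‖ ≥ (1 / (2 * σ)) * (Real.sqrt (K_H ^ 2 + 4 * σ * ‖G‖) - K_H) := by
  obtain rfl : m = cubicModel G H σ := funext hm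
  have curvature_le : ⟪H G, G⟫ ≤ K_H * ‖G‖ ^ 2 :=
    (real_inner_apply_self_le_opNorm_mul_norm_sq H G).trans (by gcongr)
  exact hηC ▸ cauchy_point_length_general (norm_ne_zero_iff.mpr hG) curvature_le hσ hα
    (isMinOn_iff.mpr hmin).localize
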